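/- Strict convexity of the multi-segment variation of arc length: Let n ≥ 2, let F₀, …, F_{n−1} be Minkowski norms on ℝ², let u₀, …, u_{n−1} ∈ ℝ² with F_i(u_i) = 1 for all i, and let v₁, …, v_{n−1} ∈ ℝ² be nonzero vectors such that u₀ and v₁ are linearly independent, u_{n−1} and v_{n−1} are linearly independent, and the edge-crossing equations ⟨u_{i−1}, v_i⟩_{u_{i−1}}^{F_{i−1}} = ⟨u_i, v_i⟩_{u_i}^{F_i} hold for all i = 1, …, n−1. Then the function f(s) = F₀(u₀ + s·v₁) + Σ_{i=1}^{n−2} F_i(u_i + s·(v_{i+1} − v_i)) + F_{n−1}(u_{n−1} − s·v_{n−1}) is strictly convex on ℝ and attains its unique global minimum at s = 0; in particular f is strictly increasing on [0, ∞) and strictly decreasing on (−∞, 0]. -/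

import Mathlib

/-!
Write `G = F²` for a Minkowski norm `F`. Everything rests on the *fundamental inequality*
`dG_y(x) ≤ 2 F(y) F(x)` for `y ≠ 0`, strict when `x` is not a multiple of `y`
(`IsMinkowskiNorm.fderiv_sq_le`, `IsMinkowskiNorm.fderiv_sq_lt`). For `x` not a multiple of `y`,
the line through `x` and `y` avoids the origin, and positivity of the Hessian makes `G` strictly
convex along it, so `G(x) > G(y) + dG_y(x - y)`; with Euler's relation `dG_y(y) = 2 G(y)` this gives
the inequality when `F(x) = F(y)`, and rescaling `x` gives it in general.

Applied at `y = a + b`, the inequality yields `F(a + b) ≤ F(a) + F(b)`, strictly when `a`, `b` are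
independent. Hence each summand of `f` is convex (also where its line meets the origin), and the
first summand is strictly convex.

For the minimum, homogeneity of `dG` gives `⟨y, w⟩_y = dG_y(w) / 2`, so the fundamental inequality
at `u_i` bounds each summand below by an affine function of `s`. Their slopes telescope to `0` by
the edge-crossing equations, whence `f(s) > f(0)` for `s ≠ 0`. Strict monotonicity on both
half-lines follows from strict convexity together with the minimum at `0`.
-/

/-- One half of the second Fréchet derivative of `F²` at `y`, evaluated at `(u, w)`:
the fundamental bilinear form `⟨u,w⟩_y^F` associated to a Minkowski norm. -/
noncomputable def minkHess {V : Type*} [NormedAddCommGroup V] [NormedSpace ℝ V]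
    (F : V → ℝ) (y u w : V) : ℝ :=
  (1 / 2) * fderiv ℝ (fun z => fderiv ℝ (fun x => F x ^ 2) z) y u w

/-- `F` is a Minkowski norm on `V`. -/
structure IsMinkowskiNorm {V : Type*} [NormedAddCommGroup V] [NormedSpace ℝ V]
    (F : V → ℝ) : Prop where
  continuous : Continuous F
  nonneg : ∀ y : V, 0 ≤ F y
  pos : ∀ y : V, y ≠ 0 → 0 < F y
  smooth : ContDiffOn ℝ (⊤ : ℕ∞) F {(0 : V)}ᶜ
  homog : ∀ l : ℝ, 0 ≤ l → ∀ y : V, F (l • y) = l * F y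
  posdef : ∀ y : V, y ≠ 0 → ∀ u : V, u ≠ 0 → 0 < minkHess F y u u

section MinkowskiNorm

variable {V : Type*} [NormedAddCommGroup V] [NormedSpace ℝ V] {F : V → ℝ}

namespace IsMinkowskiNorm

lemma norm_map_zero (hF : IsMinkowskiNorm F) : F 0 = 0 := by
  simpa using hF.homog 0 le_rfl 0

lemma contDiffAt_sq (hF : IsMinkowskiNorm F) {y : V} (hy : y ≠ 0) :
    ContDiffAt ℝ 2 (fun x => F x ^ 2) y := by
  have h : ContDiffAt ℝ (⊤ : ℕ∞) F y :=
    hF.smooth.contDiffAt (isOpen_compl_singleton.mem_nhds hy)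
  exact (h.of_le (WithTop.coe_le_coe.mpr (le_top : (2 : ℕ∞) ≤ ⊤))).pow 2

lemma differentiableAt_sq (hF : IsMinkowskiNorm F) {y : V} (hy : y ≠ 0) :
    DifferentiableAt ℝ (fun x => F x ^ 2) y :=
  (hF.contDiffAt_sq hy).differentiableAt (by norm_num)

lemma differentiableAt_fderiv_sq (hF : IsMinkowskiNorm F) {y : V} (hy : y ≠ 0) :
    DifferentiableAt ℝ (fun z => fderiv ℝ (fun x => F x ^ 2) z) y :=
  ((hF.contDiffAt_sq hy).fderiv_right (m := 1) (by norm_num)).differentiableAt (by norm_num)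

/-- Euler's relation for the 2-homogeneous function `F²`. -/
lemma fderiv_sq_self (hF : IsMinkowskiNorm F) {y : V} (hy : y ≠ 0) :
    fderiv ℝ (fun x => F x ^ 2) y y = 2 * F y ^ 2 := by
  have h1 : HasDerivAt (fun t : ℝ => t • y) y 1 := by
    simpa using (hasDerivAt_id (1 : ℝ)).smul_const y
  have h2 : HasFDerivAt (fun x => F x ^ 2) (fderiv ℝ (fun x => F x ^ 2) y) ((1 : ℝ) • y) := by
    simpa using (hF.differentiableAt_sq hy).hasFDerivAt
  have h3 := h2.comp_hasDerivAt (1 : ℝ) h1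
  have h4 : HasDerivAt (fun t : ℝ => t ^ 2 * F y ^ 2) (2 * F y ^ 2) 1 := by
    simpa using (hasDerivAt_pow 2 (1 : ℝ)).mul_const (F y ^ 2)
  refine h3.unique (h4.congr_of_eventuallyEq ?_)
  filter_upwards [lt_mem_nhds (zero_lt_one (α := ℝ))] with t ht
  simp only [Function.comp, hF.homog t ht.le y]
  ring

/-- The differential of `F²` is positively homogeneous of degree one. -/
lemma fderiv_sq_smul (hF : IsMinkowskiNorm F) {y : V} (hy : y ≠ 0) {t : ℝ} (ht : 0 < t) :
    fderiv ℝ (fun x => F x ^ 2) (t • y) = t • fderiv ℝ (fun x => F x ^ 2) y := by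
  have h1 : HasFDerivAt (fun x : V => t • x) (t • ContinuousLinearMap.id ℝ V) y :=
    (hasFDerivAt_id y).const_smul t
  have h2 := (hF.differentiableAt_sq (smul_ne_zero ht.ne' hy)).hasFDerivAt.comp y h1
  have h3 : HasFDerivAt (fun x => t ^ 2 * F x ^ 2)
      (t ^ 2 • fderiv ℝ (fun x => F x ^ 2) y) y :=
    (hF.differentiableAt_sq hy).hasFDerivAt.const_mul (t ^ 2)
  have h4 : ((fun x => F x ^ 2) ∘ fun x : V => t • x) = fun x => t ^ 2 * F x ^ 2 := by
    funext x
    simp only [Function.comp, hF.homog t ht.le x]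
    ring
  rw [h4] at h2
  have h5 := h2.unique h3
  ext w
  have h6 := DFunLike.congr_fun h5 w
  simp only [ContinuousLinearMap.comp_apply, smul_apply,
    ContinuousLinearMap.id_apply, map_smul, smul_eq_mul] at h6 ⊢
  exact mul_left_cancel₀ ht.ne' (by rw [h6]; ring)

/-- The fundamental form paired with its own base point is half the differential of `F²`. -/
lemma minkHess_self (hF : IsMinkowskiNorm F) {y : V} (hy : y ≠ 0) (w : V) :
    minkHess F y y w = (1 / 2) * fderiv ℝ (fun x => F x ^ 2) y w := by
  have h1 : HasDerivAt (fun t : ℝ => t • y) y 1 := by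
    simpa using (hasDerivAt_id (1 : ℝ)).smul_const y
  have h2 : HasFDerivAt (fun z => fderiv ℝ (fun x => F x ^ 2) z)
      (fderiv ℝ (fun z => fderiv ℝ (fun x => F x ^ 2) z) y) ((1 : ℝ) • y) := by
    simpa using (hF.differentiableAt_fderiv_sq hy).hasFDerivAt
  have h3 := h2.comp_hasDerivAt (1 : ℝ) h1
  have h4 : HasDerivAt (fun t : ℝ => t • fderiv ℝ (fun x => F x ^ 2) y)
      (fderiv ℝ (fun x => F x ^ 2) y) 1 := by
    simpa using (hasDerivAt_id (1 : ℝ)).smul_const (fderiv ℝ (fun x => F x ^ 2) y)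
  have h5 := h3.unique (h4.congr_of_eventuallyEq (by
    filter_upwards [lt_mem_nhds (zero_lt_one (α := ℝ))] with t ht
    exact hF.fderiv_sq_smul hy ht))
  rw [minkHess, h5]

/-- Strict convexity of `F²` along a line avoiding the origin, in gradient form. -/
lemma sq_gt_tangent (hF : IsMinkowskiNorm F) {x y : V} (hy : y ≠ 0) (hx : ∀ c : ℝ, x ≠ c • y) :
    F y ^ 2 + fderiv ℝ (fun x => F x ^ 2) y (x - y) < F x ^ 2 := by
  have hne : ∀ t : ℝ, y + t • (x - y) ≠ 0 := by
    intro t h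
    rcases eq_or_ne t 0 with rfl | ht
    · exact hy (by simpa using h)
    · apply hx (t⁻¹ * (t - 1))
      have h' : t • x = (t - 1) • y := by
        rw [← sub_eq_zero, ← h]
        module
      rw [mul_smul, ← h', inv_smul_smul₀ ht]
  have hxy : x - y ≠ 0 := fun h => hx 1 (by simpa using sub_eq_zero.mp h)
  have hl : ∀ t : ℝ, HasDerivAt (fun t : ℝ => y + t • (x - y)) (x - y) t := fun t => by
    simpa using ((hasDerivAt_id t).smul_const (x - y)).const_add y
  have hd1 : ∀ t : ℝ, HasDerivAt (fun t : ℝ => F (y + t • (x - y)) ^ 2)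
      (fderiv ℝ (fun x => F x ^ 2) (y + t • (x - y)) (x - y)) t := fun t => by
    have h := (hF.differentiableAt_sq (hne t)).hasFDerivAt
    exact h.comp_hasDerivAt t (hl t)
  have hd2 : ∀ t : ℝ, HasDerivAt
      (fun t : ℝ => fderiv ℝ (fun x => F x ^ 2) (y + t • (x - y)) (x - y))
      (2 * minkHess F (y + t • (x - y)) (x - y) (x - y)) t := fun t => by
    have h := (hF.differentiableAt_fderiv_sq (hne t)).hasFDerivAt
    have h' := h.comp_hasDerivAt t (hl t)
    have hcomp := h'.clm_apply (hasDerivAt_const t (x - y))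
    simp only [map_zero, add_zero, Function.comp_apply] at hcomp
    rw [minkHess, ← mul_assoc, mul_one_div_cancel two_ne_zero, one_mul]
    exact hcomp
  obtain ⟨c, hc, hc'⟩ := exists_hasDerivAt_eq_slope _ _ zero_lt_one
    (fun t _ => (hd1 t).continuousAt.continuousWithinAt) (fun t _ => hd1 t)
  obtain ⟨d, -, hd'⟩ := exists_hasDerivAt_eq_slope _ _ hc.1
    (fun t _ => (hd2 t).continuousAt.continuousWithinAt) (fun t _ => hd2 t)
  have hpos := hF.posdef _ (hne d) _ hxy
  rw [eq_div_iff (by linarith [hc.1])] at hd'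
  have := mul_pos hpos hc.1
  simp only [zero_smul, add_zero, one_smul, add_sub_cancel, sub_zero, div_one] at hc' hd'
  linarith

/-- The strict fundamental inequality. -/
lemma fderiv_sq_lt (hF : IsMinkowskiNorm F) {x y : V} (hy : y ≠ 0) (hx : ∀ c : ℝ, x ≠ c • y) :
    fderiv ℝ (fun x => F x ^ 2) y x < 2 * F y * F x := by
  have hx0 : x ≠ 0 := by simpa using hx 0
  have hFx := hF.pos x hx0
  have hFy := hF.pos y hy
  -- `r` rescales `x` to the level set of `F` through `y`.
  set r := F y / F x with hr
  have hr0 : 0 < r := div_pos hFy hFx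
  have hrF : r * F x = F y := div_mul_cancel₀ _ hFx.ne'
  have h := hF.sq_gt_tangent (x := r • x) hy (fun c hc => hx (r⁻¹ * c) (by
    rw [mul_smul, ← hc, inv_smul_smul₀ hr0.ne']))
  rw [hF.homog r hr0.le, hrF, map_sub, map_smul, hF.fderiv_sq_self hy, smul_eq_mul] at h
  refine lt_of_mul_lt_mul_left ?_ hr0.le
  calc _ < 2 * F y * F y := by linarith
    _ = r * (2 * F y * F x) := by rw [← hrF]; ring

/-- The fundamental inequality. -/
lemma fderiv_sq_le (hF : IsMinkowskiNorm F) {y : V} (hy : y ≠ 0) (x : V) :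
    fderiv ℝ (fun x => F x ^ 2) y x ≤ 2 * F y * F x := by
  by_cases h : ∀ c : ℝ, x ≠ c • y
  · exact (hF.fderiv_sq_lt hy h).le
  · push Not at h
    obtain ⟨c, rfl⟩ := h
    have hFy := hF.pos y hy
    rw [map_smul, hF.fderiv_sq_self hy, smul_eq_mul]
    rcases le_or_gt 0 c with hc | hc
    · rw [hF.homog c hc]
      exact le_of_eq (by ring)
    · have := hF.nonneg (c • y)
      have h1 : c * (2 * F y ^ 2) ≤ 0 := mul_nonpos_of_nonpos_of_nonneg hc.le (by positivity)
      have h2 : 0 ≤ 2 * F y * F (c • y) := by positivity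
      exact h1.trans h2

lemma add_le (hF : IsMinkowskiNorm F) (a b : V) : F (a + b) ≤ F a + F b := by
  rcases eq_or_ne (a + b) 0 with h | h
  · rw [h, hF.norm_map_zero]
    exact add_nonneg (hF.nonneg a) (hF.nonneg b)
  · have h1 := hF.fderiv_sq_le h a
    have h2 := hF.fderiv_sq_le h b
    have h3 := hF.fderiv_sq_self h
    rw [map_add] at h3
    have := hF.pos _ h
    refine le_of_mul_le_mul_left ?_ this
    linarith

lemma add_lt (hF : IsMinkowskiNorm F) {a b : V} (hab : LinearIndependent ℝ ![a, b]) :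
    F (a + b) < F a + F b := by
  rw [LinearIndependent.pair_iff] at hab
  have h : a + b ≠ 0 := fun h => by simpa using hab 1 1 (by simpa using h)
  have ha : ∀ c : ℝ, a ≠ c • (a + b) := by
    intro c hc
    obtain ⟨h1, h2⟩ := hab (1 - c) (-c) (by
      have := sub_eq_zero.mpr hc
      rw [← this]
      module)
    linarith
  have h1 := hF.fderiv_sq_lt h ha
  have h2 := hF.fderiv_sq_le h b
  have h3 := hF.fderiv_sq_self h
  rw [map_add] at h3
  refine lt_of_mul_lt_mul_left ?_ (hF.nonneg (a + b))
  linarith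

lemma convexOn_line (hF : IsMinkowskiNorm F) (a b : V) :
    ConvexOn ℝ Set.univ (fun s : ℝ => F (a + s • b)) := by
  refine ⟨convex_univ, fun s _ t _ p q hp hq hpq => ?_⟩
  have h : a + (p • s + q • t) • b = p • (a + s • b) + q • (a + t • b) := by
    obtain rfl : q = 1 - p := by linarith
    simp only [smul_eq_mul]
    module
  simp only [h]
  refine (hF.add_le _ _).trans ?_
  rw [hF.homog p hp, hF.homog q hq]
  rfl

lemma strictConvexOn_line (hF : IsMinkowskiNorm F) {a b : V}
    (hab : LinearIndependent ℝ ![a, b]) :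
    StrictConvexOn ℝ Set.univ (fun s : ℝ => F (a + s • b)) := by
  refine ⟨convex_univ, fun s _ t _ hst p q hp hq hpq => ?_⟩
  have h : a + (p • s + q • t) • b = p • (a + s • b) + q • (a + t • b) := by
    obtain rfl : q = 1 - p := by linarith
    simp only [smul_eq_mul]
    module
  have hind : LinearIndependent ℝ ![p • (a + s • b), q • (a + t • b)] := by
    rw [LinearIndependent.pair_iff] at hab ⊢
    intro c d hcd
    obtain ⟨h1, h2⟩ := hab (c * p + d * q) (c * p * s + d * q * t) (by
      rw [← hcd]
      module)
    -- Eliminating one unknown from the system `cp + dq = 0`, `cps + dqt = 0`.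
    have hc : c * (p * (s - t)) = 0 := by linear_combination h2 - t * h1
    have hd : d * (q * (t - s)) = 0 := by linear_combination h2 - s * h1
    exact ⟨(mul_eq_zero.mp hc).resolve_right (mul_ne_zero hp.ne' (sub_ne_zero.mpr hst)),
      (mul_eq_zero.mp hd).resolve_right (mul_ne_zero hq.ne' (sub_ne_zero.mpr hst.symm))⟩
  simp only [h]
  refine (hF.add_lt hind).trans_le ?_
  rw [hF.homog p hp.le, hF.homog q hq.le]
  rfl

lemma ne_zero_of_unit (hF : IsMinkowskiNorm F) {y : V} (hy : F y = 1) : y ≠ 0 := by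
  rintro rfl
  rw [hF.norm_map_zero] at hy
  exact zero_ne_one hy

/-- The fundamental inequality at a unit vector, as an affine lower bound along a line. -/
lemma tangent_le (hF : IsMinkowskiNorm F) {y : V} (hy : F y = 1) (w : V) (s : ℝ) :
    1 + s * minkHess F y y w ≤ F (y + s • w) := by
  have h0 := hF.ne_zero_of_unit hy
  have h := hF.fderiv_sq_le h0 (y + s • w)
  rw [map_add, hF.fderiv_sq_self h0, map_smul, smul_eq_mul, hy] at h
  rw [hF.minkHess_self h0]
  linarith

lemma tangent_lt (hF : IsMinkowskiNorm F) {y w : V} (hy : F y = 1)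
    (hyw : LinearIndependent ℝ ![y, w]) {s : ℝ} (hs : s ≠ 0) :
    1 + s * minkHess F y y w < F (y + s • w) := by
  have h0 := hF.ne_zero_of_unit hy
  have h := hF.fderiv_sq_lt (x := y + s • w) h0 (fun c hc => hs
    ((LinearIndependent.pair_iff.mp hyw) (1 - c) s (by
      rw [← sub_eq_zero.mpr hc]
      module)).2)
  rw [map_add, hF.fderiv_sq_self h0, map_smul, smul_eq_mul, hy] at h
  rw [hF.minkHess_self h0]
  linarith

end IsMinkowskiNorm

lemma minkHess_sub (y u w w' : V) :
    minkHess F y u (w - w') = minkHess F y u w - minkHess F y u w' := by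
  simp only [minkHess, map_sub]
  ring

lemma minkHess_neg (y u w : V) : minkHess F y u (-w) = -minkHess F y u w := by
  simp only [minkHess, map_neg]
  ring

end MinkowskiNorm

/-- Strict convexity of the multi-segment variation of arc length. -/
theorem multi_segment_variation_strict_convex
    (n : ℕ) (hn : 2 ≤ n)
    (F : ℕ → EuclideanSpace ℝ (Fin 2) → ℝ)
    (u v : ℕ → EuclideanSpace ℝ (Fin 2))
    (hF : ∀ i, i < n → IsMinkowskiNorm (F i))
    (hu : ∀ i, i < n → F i (u i) = 1)
    (hv : ∀ i, 1 ≤ i → i ≤ n - 1 → v i ≠ 0)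
    (hcross : ∀ i, 1 ≤ i → i ≤ n - 1 →
      minkHess (F (i - 1)) (u (i - 1)) (u (i - 1)) (v i)
        = minkHess (F i) (u i) (u i) (v i))
    (h0 : LinearIndependent ℝ ![u 0, v 1])
    (hlast : LinearIndependent ℝ ![u (n - 1), v (n - 1)])
    (f : ℝ → ℝ)
    (hf : f = fun s : ℝ =>
      F 0 (u 0 + s • v 1)
        + ∑ i ∈ Finset.Ico 1 (n - 1), F i (u i + s • (v (i + 1) - v i))
        + F (n - 1) (u (n - 1) - s • v (n - 1))) :
    StrictConvexOn ℝ Set.univ f ∧ (∀ s : ℝ, s ≠ 0 → f 0 < f s) ∧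
      StrictMonoOn f (Set.Ici 0) ∧ StrictAntiOn f (Set.Iic 0) := by
  have hmid : ∀ S : Finset ℕ, (∀ i ∈ S, i < n) →
      ConvexOn ℝ Set.univ (fun s : ℝ => ∑ i ∈ S, F i (u i + s • (v (i + 1) - v i))) := by
    intro S
    induction S using Finset.induction_on with
    | empty => intro _; simpa using convexOn_const (0 : ℝ) convex_univ
    | insert i S hi ih =>
      intro hS
      simp only [Finset.sum_insert hi]
      exact ((hF i (hS i (by simp))).convexOn_line _ _).add
        (ih fun j hj => hS j (by simp [hj]))
  have hconv : StrictConvexOn ℝ Set.univ f := by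
    have h3 := (hF (n - 1) (by omega)).convexOn_line (u (n - 1)) (-v (n - 1))
    simp only [smul_neg, ← sub_eq_add_neg] at h3
    rw [hf]
    exact (((hF 0 (by omega)).strictConvexOn_line h0).add_convexOn
      (hmid (Finset.Ico 1 (n - 1)) (by intro i hi; rw [Finset.mem_Ico] at hi; omega))).add_convexOn
      h3
  have hmin : ∀ s : ℝ, s ≠ 0 → f 0 < f s := by
    intro s hs
    set c : ℕ → ℝ := fun i => minkHess (F i) (u i) (u i) (v i) with hc
    have h1 := (hF 0 (by omega)).tangent_lt (hu 0 (by omega)) h0 hs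
    have hc1 : minkHess (F 0) (u 0) (u 0) (v 1) = c 1 := hcross 1 le_rfl (by omega)
    have h3 := (hF (n - 1) (by omega)).tangent_le (hu (n - 1) (by omega)) (-v (n - 1)) s
    rw [minkHess_neg, smul_neg, ← sub_eq_add_neg] at h3
    have h2 : ∑ i ∈ Finset.Ico 1 (n - 1), (1 + s * (c (i + 1) - c i)) ≤
        ∑ i ∈ Finset.Ico 1 (n - 1), F i (u i + s • (v (i + 1) - v i)) := by
      refine Finset.sum_le_sum fun i hi => ?_
      rw [Finset.mem_Ico] at hi
      have h := (hF i (by omega)).tangent_le (hu i (by omega)) (v (i + 1) - v i) s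
      have hci : minkHess (F i) (u i) (u i) (v (i + 1)) = c (i + 1) :=
        hcross (i + 1) (by omega) (by omega)
      rwa [minkHess_sub, hci] at h
    rw [Finset.sum_add_distrib, ← Finset.mul_sum,
      Finset.sum_Ico_sub c (by omega : 1 ≤ n - 1)] at h2
    have h4 : ∑ i ∈ Finset.Ico 1 (n - 1), F i (u i) = ∑ i ∈ Finset.Ico 1 (n - 1), (1 : ℝ) :=
      Finset.sum_congr rfl fun i hi => hu i (by rw [Finset.mem_Ico] at hi; omega)
    rw [hf]
    simp only [zero_smul, add_zero, sub_zero, h4, hu 0 (by omega), hu (n - 1) (by omega)]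
    rw [hc1] at h1
    change 1 + s * -c (n - 1) ≤ _ at h3
    linarith
  refine ⟨hconv, hmin, ?_, ?_⟩
  · intro a ha b _ hab
    rcases eq_or_lt_of_le (Set.mem_Ici.mp ha) with rfl | ha
    · exact hmin b hab.ne'
    · have hlt := hconv.lt_on_openSegment (Set.mem_univ 0) (Set.mem_univ b) (ha.trans hab).ne
        (by rw [openSegment_eq_Ioo (ha.trans hab)]; exact ⟨ha, hab⟩)
      rwa [max_eq_right (hmin b (ha.trans hab).ne').le] at hlt
  · intro a _ b hb hab
    rcases eq_or_lt_of_le (Set.mem_Iic.mp hb) with rfl | hb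
    · exact hmin a hab.ne
    · have hlt := hconv.lt_on_openSegment (Set.mem_univ a) (Set.mem_univ 0) (hab.trans hb).ne
        (by rw [openSegment_eq_Ioo (hab.trans hb)]; exact ⟨hab, hb⟩)
      rwa [max_eq_left (hmin a (hab.trans hb).ne).le] at hlt
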